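/- Let (i,j) ∈ E be an edge of a finite connected simple graph G with ρ_min ≥ 2, and let the lazy parameters be α_u = 1/(ρ_u+1). Fix ζ ∈ ℝ and define 𝒵(ζ) = max{0, (ζ − 𝔖(i,j) − C₄(i,j))/𝔗(i,j)}, Z̄_min(ζ) = 𝒵(ζ)/ρ_min, Z̄_max(ζ) = 𝒵(ζ)/ρ_max, the square-matching floor 𝒮̲(ζ) = max{C₄(i,j)/2, (1/2)·[ζ − 𝔖(i,j) − 𝔗(i,j)·(ρ_min−1)]₊}, the non-lazy modulus φ₀(ζ) = −[𝔎(i,j) − Z̄_max(ζ) − 𝒮̲(ζ)]₊ − [𝔎(i,j) − Z̄_min(ζ) − 𝒮̲(ζ)]₊ + Z̄_max(ζ), and φ(ζ) = (1−α_⋆)·φ₀(ζ) − Δ_ij(α), where α_⋆ = min{α_i,α_j} if c_OR-0(i,j) ≥ 0 and α_⋆ = max{α_i,α_j} otherwise, and Δ_ij(α) = max{α_i,α_j} − min{α_i,α_j}. Then c_BF(i,j) ≥ ζ implies c_OR(i,j) ≥ φ(ζ). -/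

import Mathlib

namespace Curv

open Finset

noncomputable section

variable {V : Type*} [Fintype V] [DecidableEq V] (G : SimpleGraph V) [DecidableRel G.Adj]

/-- `μ` is a probability distribution on the (finite) vertex set. -/
def IsProb (μ : V → ℝ) : Prop := (∀ x, 0 ≤ μ x) ∧ ∑ x, μ x = 1

/-- `π` is a coupling of `μ` and `ν`. -/
def IsCoupling (μ ν : V → ℝ) (π : V → V → ℝ) : Prop :=
  (∀ x y, 0 ≤ π x y) ∧ (∀ x, ∑ y, π x y = μ x) ∧ (∀ y, ∑ x, π x y = ν y)

/-- Transport cost of a plan `π` with respect to the shortest-path graph distance. -/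
def cost (π : V → V → ℝ) : ℝ := ∑ x, ∑ y, (G.dist x y : ℝ) * π x y

/-- Wasserstein-1 distance between two distributions on the vertex set. -/
def W1 (μ ν : V → ℝ) : ℝ := sInf {c : ℝ | ∃ π, IsCoupling μ ν π ∧ cost G π = c}

/-- Dirac mass at `u`. -/
def dirac (u : V) : V → ℝ := fun x => if x = u then 1 else 0

/-- Uniform distribution on the neighbours of `u`. -/
def unif (u : V) : V → ℝ := fun x => if G.Adj u x then ((G.degree u : ℝ))⁻¹ else 0

/-- Lazy random-walk measure with laziness parameter `α`. -/
def mGen (α : ℝ) (u : V) : V → ℝ := fun x => α * dirac u x + (1 - α) * unif G u x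

/-- Canonical laziness `1/(deg u + 1)`. -/
def alphaL (u : V) : ℝ := ((G.degree u : ℝ) + 1)⁻¹

/-- The lazy random-walk measure `m_u`. -/
def mLazy (u : V) : V → ℝ := mGen G (alphaL G u) u

/-- Ollivier–Ricci curvature (lazy). -/
def cOR (i j : V) : ℝ := 1 - W1 G (mLazy G i) (mLazy G j)

/-- Non-lazy Ollivier–Ricci curvature. -/
def cOR0 (i j : V) : ℝ := 1 - W1 G (unif G i) (unif G j)

/-- Positive part `[x]₊`. -/
def pos (x : ℝ) : ℝ := max x 0

/-- Triangle count `△(u,v)`. -/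
def tri (u v : V) : ℕ := (G.neighborFinset u ∩ G.neighborFinset v).card

/-- Unique neighbours `N(u) \ (N(v) ∪ {v})`. -/
def uniq (u v : V) : Finset V := G.neighborFinset u \ insert v (G.neighborFinset v)

/-- `ξ_u(u,v)`: unique neighbours of `u` having a neighbour among unique neighbours of `v`. -/
def xiSet (u v : V) : Finset V := (uniq G u v).filter fun k => ∃ w ∈ uniq G v u, G.Adj k w

/-- `Ξ_uv`. -/
def Xi (u v : V) : ℕ := (xiSet G u v).card + (xiSet G v u).card

/-- `□̃(k,u,v) = |N(k) ∩ (N(v)\(N(u)∪{u}))|`. -/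
def boxT (k u v : V) : ℕ := (G.neighborFinset k ∩ uniq G v u).card

/-- `ϖ_max(u,v)`. -/
def varpi (u v : V) : ℕ :=
  max (((G.neighborFinset u).erase v).sup fun k => boxT G k u v)
      (((G.neighborFinset v).erase u).sup fun w => boxT G w v u)

/-- `þ_max(u,v) = ϖ_max(u,v)·max{ρ_u,ρ_v}`. -/
def thMax (u v : V) : ℕ := varpi G u v * max (G.degree u) (G.degree v)

/-- Edgewise 4-cycle coefficient `C₄(u,v)`. -/
def C4 (u v : V) : ℝ := if 0 < Xi G u v then (Xi G u v : ℝ) / (thMax G u v : ℝ) else 0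

/-- Graph-wide 4-cycle constant `C₄(G)`. -/
def C4Graph : ℝ := sSup {x : ℝ | ∃ u v, G.Adj u v ∧ x = C4 G u v}

def rhoMin (i j : V) : ℕ := min (G.degree i) (G.degree j)

def rhoMax (i j : V) : ℕ := max (G.degree i) (G.degree j)

/-- `𝔖(i,j)`. -/
def frakS (i j : V) : ℝ := 2 / (G.degree i : ℝ) + 2 / (G.degree j : ℝ) - 2

/-- `𝔗(i,j)`. -/
def frakT (i j : V) : ℝ := 2 / (rhoMax G i j : ℝ) + 1 / (rhoMin G i j : ℝ)

/-- `𝔎(i,j)`. -/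
def frakK (i j : V) : ℝ := 1 - 1 / (rhoMin G i j : ℝ) - 1 / (rhoMax G i j : ℝ)

/-- `Z_min(i,j)`. -/
def Zmin (i j : V) : ℝ := (tri G i j : ℝ) / (rhoMin G i j : ℝ)

/-- `Z_max(i,j)`. -/
def Zmax (i j : V) : ℝ := (tri G i j : ℝ) / (rhoMax G i j : ℝ)

/-- Balanced Forman curvature. -/
def cBF (i j : V) : ℝ :=
  if rhoMin G i j = 1 then 0
  else frakS G i j + frakT G i j * (tri G i j : ℝ) + C4 G i j

/-- `M` is a matching in the cross-edge bipartite graph `B_ij`. -/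
def IsCrossMatching (i j : V) (M : Finset (V × V)) : Prop :=
  (∀ p ∈ M, p.1 ∈ uniq G i j ∧ p.2 ∈ uniq G j i ∧ G.Adj p.1 p.2) ∧
  (∀ p ∈ M, ∀ q ∈ M, p ≠ q → p.1 ≠ q.1 ∧ p.2 ≠ q.2)

/-- Maximum matching size `𝔪(i,j)` in the cross-edge bipartite graph. -/
def matchNum (i j : V) : ℕ :=
  sSup {n : ℕ | ∃ M : Finset (V × V), IsCrossMatching G i j M ∧ M.card = n}

/-- `𝒮(i,j) = 𝔪(i,j)/ρ_max`. -/
def SS (i j : V) : ℝ := (matchNum G i j : ℝ) / (rhoMax G i j : ℝ)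

/-- Lazy per-neighbour weight `w_u = (1-α)/ρ_u`. -/
def wA (α : ℝ) (u : V) : ℝ := (1 - α) / (G.degree u : ℝ)

/-- Lazy conductance sum `Σ`. -/
def SigmaA (αi αj : ℝ) (i j : V) : ℝ :=
  (G.degree i : ℝ) / (1 - αi) + (G.degree j : ℝ) / (1 - αj)

/-- `Const_α`. -/
def ConstA (αi αj : ℝ) (i j : V) : ℝ :=
  -1 + 2 * (min αi ((1 - αj) / (G.degree j : ℝ)) + min αj ((1 - αi) / (G.degree i : ℝ)))
    + (pos (αi - (1 - αj) / (G.degree j : ℝ)) + pos ((1 - αj) / (G.degree j : ℝ) - αi)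
      + pos (αj - (1 - αi) / (G.degree i : ℝ)) + pos ((1 - αi) / (G.degree i : ℝ) - αj))
    + ((G.degree i : ℝ) + (G.degree j : ℝ) - 2) / SigmaA G αi αj i j

/-- `Slope_α`. -/
def SlopeA (αi αj : ℝ) (i j : V) : ℝ := wA G αi i + wA G αj j - 2 / SigmaA G αi αj i j

/-- `α_⋆`: `α_min` when the non-lazy curvature is nonnegative, `α_max` otherwise. -/
def alphaStar (i j : V) : ℝ :=
  if 0 ≤ cOR0 G i j then min (alphaL G i) (alphaL G j) else max (alphaL G i) (alphaL G j)

/-- `Δ_ij(α) = α_max − α_min` for the canonical laziness. -/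
def DeltaL (i j : V) : ℝ := max (alphaL G i) (alphaL G j) - min (alphaL G i) (alphaL G j)

/-- Minimum triangle mass `𝒵(ζ)` forced by a BF level `ζ`. -/
def Zzeta (i j : V) (z : ℝ) : ℝ := max 0 ((z - frakS G i j - C4 G i j) / frakT G i j)

/-- Square-matching floor `𝒮̲(ζ)`. -/
def Sfloor (i j : V) (z : ℝ) : ℝ :=
  max (C4 G i j / 2)
    ((1 / 2) * pos (z - frakS G i j - frakT G i j * ((rhoMin G i j : ℝ) - 1)))

/-- Non-lazy transfer modulus `φ₀(ζ)`. -/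
def phi0 (i j : V) (z : ℝ) : ℝ :=
  -(pos (frakK G i j - Zzeta G i j z / (rhoMax G i j : ℝ) - Sfloor G i j z))
    - pos (frakK G i j - Zzeta G i j z / (rhoMin G i j : ℝ) - Sfloor G i j z)
    + Zzeta G i j z / (rhoMax G i j : ℝ)

/-- Lazy transfer modulus `φ(ζ)`. -/
def phiBFOR (i j : V) (z : ℝ) : ℝ := (1 - alphaStar G i j) * phi0 G i j z - DeltaL G i j

/-!
To transport `ν_i` to `ν_j`, let the mass both measures have on common neighbours of `i` and `j`
stay, and send mass along the edges joining a neighbour of `i` to a neighbour of `j` that close a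
4-cycle; these can carry `C₄ / 2` at unit cost. Whatever is left is moved greedily onto `i`, out of
`j`, and across the edge. This bounds the non-lazy curvature from below in terms of `△` and `C₄`.
A Balanced Forman curvature of at least `ζ` forces `△ ≥ 𝒵(ζ)`, and since `△ ≤ ρ_min - 1` also
`C₄ / 2 ≥ 𝒮̲(ζ)`, so that the bound is at least `φ₀(ζ)`.

For the lazy measures, the excess of lazy mass at one endpoint can be routed in two ways, one for
each of the two possible values of `α_⋆`.
-/

section Distance

variable {X : Type*} [DecidableEq X] {H : SimpleGraph X} [DecidableRel H.Adj] {i j x y : X}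

theorem dist_le_ite_add_ite (hij : H.Adj i j) (hx : x = j ∨ H.Adj i x)
    (hy : y = i ∨ H.Adj j y) :
    (H.dist x y : ℝ) ≤ (if x = j then 1 else 2) + (if y = i ∨ H.Adj i y then 0 else 1) := by
  norm_cast
  by_cases hxj : x = j
  · have hadj : H.Adj x y := by
      rcases hy with rfl | hjy
      exacts [hxj ▸ hij.symm, hxj ▸ hjy]
    simp [hxj ▸ SimpleGraph.dist_eq_one_iff_adj.2 hadj, hxj]
  have hix : H.Adj i x := hx.resolve_left hxj
  rw [if_neg hxj]
  split_ifs with hyi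
  · rcases hyi with rfl | hiy
    · exact (H.dist_le (.cons hix.symm .nil)).trans one_le_two
    · exact H.dist_le (.cons hix.symm (.cons hiy .nil))
  · exact H.dist_le (.cons hix.symm (.cons hij (.cons (hy.resolve_left (not_or.1 hyi).1) .nil)))

end Distance

section Dirac

variable {X : Type*} [DecidableEq X]

theorem dirac_nonneg (u : X) : 0 ≤ dirac u := fun _ => ite_nonneg zero_le_one le_rfl

theorem eq_of_dirac_ne_zero {u x : X} (h : dirac u x ≠ 0) : x = u := by
  by_contra hne
  exact h (if_neg hne)

end Dirac

section Indicator

variable {X : Type*}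

/-- The indicator function of `S`. -/
def ind (S : Finset X) : X → ℝ := (S : Set X).indicator 1

theorem ind_nonneg (S : Finset X) : 0 ≤ ind S := Set.indicator_nonneg fun _ _ => zero_le_one

theorem support_ind (S : Finset X) : (ind S).support = S := by
  rw [ind, Set.support_indicator, Function.support_one, Set.inter_univ]

theorem sum_ind [Fintype X] (S : Finset X) : ∑ x, ind S x = #S := by
  classical simp [ind, Set.indicator_apply]

end Indicator

section NeighborMeasure

variable {X : Type*} [Fintype X] {H : SimpleGraph X} [DecidableRel H.Adj]

theorem unif_nonneg (u : X) : 0 ≤ unif H u := fun _ => ite_nonneg (by positivity) le_rfl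

theorem support_unif_subset (u : X) : (unif H u).support ⊆ H.neighborSet u := fun x hx => by
  by_contra hux
  exact hx (if_neg hux)

theorem sum_unif {u v : X} (huv : H.Adj u v) : ∑ x, unif H u x = 1 := by
  have hdeg : (H.degree u : ℝ) ≠ 0 := by exact_mod_cast huv.degree_pos_left.ne'
  simp only [unif]
  rw [← sum_filter, sum_const, ← SimpleGraph.neighborFinset_eq_filter,
    SimpleGraph.card_neighborFinset_eq_degree, nsmul_eq_mul, mul_inv_cancel₀ hdeg]

theorem alphaL_nonneg (u : X) : 0 ≤ alphaL H u := by
  unfold alphaL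
  positivity

theorem alphaL_le_one (u : X) : alphaL H u ≤ 1 :=
  inv_le_one_of_one_le₀ (le_add_of_nonneg_left (Nat.cast_nonneg _))

theorem DeltaL_eq_abs (u v : X) : DeltaL H u v = |alphaL H u - alphaL H v| :=
  max_sub_min_eq_abs' _ _

theorem alphaStar_eq_or_eq (u v : X) :
    alphaStar H u v = alphaL H u ∨ alphaStar H u v = alphaL H v := by
  unfold alphaStar
  split_ifs
  exacts [min_choice _ _, max_choice _ _]

theorem alphaStar_le_one (u v : X) : alphaStar H u v ≤ 1 := by
  rcases alphaStar_eq_or_eq (H := H) u v with h | h <;> rw [h] <;> exact alphaL_le_one _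

theorem frakT_pos {u v : X} (huv : H.Adj u v) : 0 < frakT H u v := by
  have hmin : 0 < rhoMin H u v := lt_min huv.degree_pos_left huv.degree_pos_right
  unfold frakT
  positivity

end NeighborMeasure

section Transport

variable {X : Type*} [Fintype X] {H : SimpleGraph X}

/-- `μ` can be transported to `ν` at cost at most `c`. Every bound on `W1` below is proved in this
form, since, unlike `W1`, it can be added up piece by piece without discussing whether the infimum
is attained. The masses of `μ` and `ν` need not be `1`. -/
def TransportLE (H : SimpleGraph X) (μ ν : X → ℝ) (c : ℝ) : Prop :=
  ∃ π, IsCoupling μ ν π ∧ cost H π ≤ c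

namespace TransportLE

variable {μ ν μ' ν' : X → ℝ} {c d : ℝ}

theorem W1_le (h : TransportLE H μ ν c) : W1 H μ ν ≤ c := by
  obtain ⟨π, hπ, hcost⟩ := h
  have hbdd : BddBelow {c : ℝ | ∃ π, IsCoupling μ ν π ∧ cost H π = c} := by
    refine ⟨0, ?_⟩
    rintro _ ⟨π', hπ', rfl⟩
    exact sum_nonneg fun x _ => sum_nonneg fun y _ => mul_nonneg (Nat.cast_nonneg _) (hπ'.1 x y)
  exact (csInf_le hbdd ⟨π, hπ, rfl⟩).trans hcost

theorem mono (h : TransportLE H μ ν c) (hcd : c ≤ d) : TransportLE H μ ν d :=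
  let ⟨π, hπ, hcost⟩ := h
  ⟨π, hπ, hcost.trans hcd⟩

theorem symm (h : TransportLE H μ ν c) : TransportLE H ν μ c := by
  obtain ⟨π, ⟨hnonneg, hfst, hsnd⟩, hcost⟩ := h
  refine ⟨fun x y => π y x, ⟨fun x y => hnonneg y x, hsnd, hfst⟩, ?_⟩
  rw [cost, sum_comm]
  simpa only [H.dist_comm, cost] using hcost

theorem add (h : TransportLE H μ ν c) (h' : TransportLE H μ' ν' d) :
    TransportLE H (μ + μ') (ν + ν') (c + d) := by
  obtain ⟨π, ⟨hnonneg, hfst, hsnd⟩, hcost⟩ := h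
  obtain ⟨π', ⟨hnonneg', hfst', hsnd'⟩, hcost'⟩ := h'
  refine ⟨π + π', ⟨fun x y => ?_, fun x => ?_, fun y => ?_⟩, ?_⟩
  · exact add_nonneg (hnonneg x y) (hnonneg' x y)
  · simp only [Pi.add_apply, sum_add_distrib, hfst, hfst']
  · simp only [Pi.add_apply, sum_add_distrib, hsnd, hsnd']
  · simpa only [cost, Pi.add_apply, mul_add, sum_add_distrib] using add_le_add hcost hcost'

theorem smul (h : TransportLE H μ ν c) {t : ℝ} (ht : 0 ≤ t) :
    TransportLE H (t • μ) (t • ν) (t * c) := by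
  obtain ⟨π, ⟨hnonneg, hfst, hsnd⟩, hcost⟩ := h
  refine ⟨t • π, ⟨fun x y => mul_nonneg ht (hnonneg x y), fun x => ?_, fun y => ?_⟩, ?_⟩
  · simp only [Pi.smul_apply, smul_eq_mul, ← mul_sum, hfst]
  · simp only [Pi.smul_apply, smul_eq_mul, ← mul_sum, hsnd]
  · simpa only [cost, Pi.smul_apply, smul_eq_mul, mul_left_comm _ t, ← mul_sum]
      using mul_le_mul_of_nonneg_left hcost ht

end TransportLE

variable {f g a b : X → ℝ}

theorem transportLE_self (hf : 0 ≤ f) : TransportLE H f f 0 := by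
  classical
  refine ⟨fun x y => if x = y then f x else 0, ⟨fun x y => ?_, by simp, by simp⟩, ?_⟩
  · exact ite_nonneg (hf x) le_rfl
  · simp [cost]

-- A cost of the form `a x + b y` only sees the marginals, so the product coupling is good enough.
theorem transportLE_of_dist_le_add (hf : 0 ≤ f) (hg : 0 ≤ g) (hfg : ∑ x, f x = ∑ y, g y)
    (hdist : ∀ x y, f x ≠ 0 → g y ≠ 0 → (H.dist x y : ℝ) ≤ a x + b y) :
    TransportLE H f g (∑ x, f x * a x + ∑ y, g y * b y) := by
  set m := ∑ x, f x with hm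
  have hm0 : 0 ≤ m := sum_nonneg fun x _ => hf x
  have eq_zero_of_mass {h : X → ℝ} (hh : 0 ≤ h) (hmass : m = ∑ x, h x) (x : X) (hm : m = 0) :
      h x = 0 :=
    (sum_eq_zero_iff_of_nonneg fun x _ => hh x).1 (hmass.symm.trans hm) x (mem_univ x)
  have hfst (x : X) : ∑ y, f x * g y / m = f x := by
    rw [← sum_div, ← mul_sum, ← hfg]
    exact mul_div_cancel_of_imp (eq_zero_of_mass hf hm x)
  have hsnd (y : X) : ∑ x, f x * g y / m = g y := by
    rw [← sum_div, ← sum_mul, ← hm, mul_comm]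
    exact mul_div_cancel_of_imp (eq_zero_of_mass hg hfg y)
  have hplan (x y : X) : 0 ≤ f x * g y / m := div_nonneg (mul_nonneg (hf x) (hg y)) hm0
  refine ⟨fun x y => f x * g y / m, ⟨hplan, hfst, hsnd⟩, ?_⟩
  calc cost H (fun x y => f x * g y / m)
      ≤ ∑ x, ∑ y, (a x + b y) * (f x * g y / m) := by
        refine sum_le_sum fun x _ => sum_le_sum fun y _ => ?_
        by_cases hx : f x = 0
        · simp [hx]
        by_cases hy : g y = 0
        · simp [hy]
        exact mul_le_mul_of_nonneg_right (hdist x y hx hy) (hplan x y)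
    _ = ∑ x, a x * ∑ y, f x * g y / m + ∑ y, b y * ∑ x, f x * g y / m := by
        simp only [add_mul, sum_add_distrib, mul_sum]
        rw [sum_comm (f := fun x y => b y * (f x * g y / m))]
    _ = ∑ x, f x * a x + ∑ y, g y * b y := by simp only [hfst, hsnd, mul_comm]

theorem transportLE_of_dist_le (hf : 0 ≤ f) (hg : 0 ≤ g) (hfg : ∑ x, f x = ∑ y, g y) {d : ℕ}
    (hdist : ∀ x y, f x ≠ 0 → g y ≠ 0 → H.dist x y ≤ d) :
    TransportLE H f g ((∑ x, f x) * d) := by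
  have h := transportLE_of_dist_le_add (a := fun _ => d) (b := 0) hf hg hfg fun x y hx hy => by
    simpa using hdist x y hx hy
  simpa [sum_mul] using h

theorem exists_add_eq_and_sum_eq_min (hf : 0 ≤ f) {m : ℝ} (hm : 0 ≤ m) :
    ∃ f₁ f₂ : X → ℝ, 0 ≤ f₁ ∧ 0 ≤ f₂ ∧ f₁ + f₂ = f ∧
      f₁.support ⊆ f.support ∧ f₂.support ⊆ f.support ∧
      ∑ x, f₁ x = min (∑ x, f x) m ∧ ∑ x, f₂ x = pos (∑ x, f x - m) := by
  set F := ∑ x, f x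
  have hF : 0 ≤ F := sum_nonneg fun x _ => hf x
  have hF_mul : min F m / F * F = min F m := div_mul_cancel_of_imp fun h => by simp [h, hm]
  have hratio : min F m / F ≤ 1 := div_le_one_of_le₀ (min_le_left _ _) hF
  refine ⟨(min F m / F) • f, (1 - min F m / F) • f, smul_nonneg (by positivity) hf,
    smul_nonneg (sub_nonneg.2 hratio) hf, by rw [← add_smul, add_sub_cancel, one_smul],
    Function.support_const_smul_subset _ f, Function.support_const_smul_subset _ f, ?_, ?_⟩
  · simpa only [Pi.smul_apply, smul_eq_mul, ← mul_sum] using hF_mul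
  · simp only [Pi.smul_apply, smul_eq_mul, ← mul_sum]
    rw [sub_mul, one_mul, hF_mul, pos, ← sub_self F, max_sub_sub_left, min_comm]

variable [DecidableEq X] {i j : X}

theorem sum_dirac (u : X) : ∑ x, dirac u x = 1 := by simp [dirac]

theorem transportLE_dirac_of_adj (hij : H.Adj i j) : TransportLE H (dirac i) (dirac j) 1 := by
  have h := transportLE_of_dist_le (H := H) (d := 1) (dirac_nonneg i) (dirac_nonneg j)
    (by simp only [sum_dirac]) fun x y hx hy => by
      rw [eq_of_dirac_ne_zero hx, eq_of_dirac_ne_zero hy, SimpleGraph.dist_eq_one_iff_adj.2 hij]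
  simpa [sum_dirac] using h

theorem transportLE_smul_dirac (hf : 0 ≤ f) (v : X) :
    TransportLE H f ((∑ x, f x) • dirac v) (∑ x, f x * H.dist x v) := by
  have hmass : ∑ x, f x = ∑ y, ((∑ x, f x) • dirac v) y := by
    simp only [Pi.smul_apply, smul_eq_mul, ← mul_sum, sum_dirac, mul_one]
  have h := transportLE_of_dist_le_add (H := H) (a := fun x => H.dist x v) (b := 0) hf
    (smul_nonneg (sum_nonneg fun x _ => hf x) (dirac_nonneg v))
    hmass fun x y _ hy => by
      rw [eq_of_dirac_ne_zero (right_ne_zero_of_mul hy), Pi.zero_apply, add_zero]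
  simpa using h

theorem transportLE_smul_dirac_of_adj (hf : 0 ≤ f) {v : X} (hsupp : f.support ⊆ H.neighborSet v) :
    TransportLE H f ((∑ x, f x) • dirac v) (∑ x, f x) := by
  refine (transportLE_smul_dirac hf v).mono (sum_le_sum fun x _ => ?_)
  by_cases hx : f x = 0
  · simp [hx]
  · have hadj : H.Adj x v := (hsupp hx).symm
    simp [SimpleGraph.dist_eq_one_iff_adj.2 hadj]

theorem TransportLE.smul_dirac {μ ν : X → ℝ} {c : ℝ} (h : TransportLE H μ ν c) {v : X}
    (hsupp : ν.support ⊆ H.neighborSet v) :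
    TransportLE H μ ((∑ x, μ x) • dirac v) (c + ∑ x, μ x) := by
  obtain ⟨π, ⟨hnonneg, hfst, hsnd⟩, hcost⟩ := h
  have hμ : 0 ≤ μ := fun x => hfst x ▸ sum_nonneg fun y _ => hnonneg x y
  refine (transportLE_smul_dirac hμ v).mono ?_
  calc ∑ x, μ x * H.dist x v
      = ∑ x, ∑ y, H.dist x v * π x y := by
        simp only [← mul_sum, hfst, mul_comm (μ _)]
    _ ≤ ∑ x, ∑ y, (H.dist x y * π x y + π x y) := by
        refine sum_le_sum fun x _ => sum_le_sum fun y _ => ?_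
        by_cases hy : ν y = 0
        · have hcol : ∀ x ∈ univ, π x y = 0 :=
            (sum_eq_zero_iff_of_nonneg fun x _ => hnonneg x y).1 ((hsnd y).trans hy)
          simp [hcol x (mem_univ x)]
        · have hadj : H.Adj y v := (hsupp hy).symm
          have htri : H.dist x v ≤ H.dist x y + 1 :=
            SimpleGraph.dist_eq_one_iff_adj.2 hadj ▸ hadj.reachable.dist_triangle_right x
          rw [← add_one_mul]
          exact mul_le_mul_of_nonneg_right (by exact_mod_cast htri) (hnonneg x y)
    _ = cost H π + ∑ x, μ x := by simp only [cost, sum_add_distrib, hfst]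
    _ ≤ c + ∑ x, μ x := by gcongr

variable {A B : ℝ} {u t r : X → ℝ}

theorem transportLE_star (hij : H.Adj i j) (hA : 0 ≤ A) (hB : 0 ≤ B)
    (hu : 0 ≤ u) (ht : 0 ≤ t) (hr : 0 ≤ r) (hu_supp : u.support ⊆ H.neighborSet i)
    (ht_supp : t.support ⊆ H.commonNeighbors i j) (hr_supp : r.support ⊆ H.neighborSet j)
    (hmass : A + ∑ x, u x = B + ∑ x, t x + ∑ x, r x) :
    TransportLE H (A • dirac j + u) (B • dirac i + t + r) (A + 2 * ∑ x, u x + ∑ x, r x) := by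
  classical
  have hsource (x : X) (hx : (A • dirac j + u) x ≠ 0) : x = j ∨ H.Adj i x := by
    by_contra! hx'
    have hux : u x = 0 := Function.notMem_support.1 fun h => hx'.2 (hu_supp h)
    exact hx (by simp [dirac, hx'.1, hux])
  have htarget (y : X) (hy : (B • dirac i + t + r) y ≠ 0) : y = i ∨ H.Adj j y := by
    by_contra! hy'
    have hty : t y = 0 := Function.notMem_support.1 fun h => hy'.2 (ht_supp h).2
    have hry : r y = 0 := Function.notMem_support.1 fun h => hy'.2 (hr_supp h)
    exact hy (by simp [dirac, hy'.1, hty, hry])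
  refine (transportLE_of_dist_le_add ?_ ?_ ?_ fun x y hx hy =>
    dist_le_ite_add_ite hij (hsource x hx) (htarget y hy)).mono (add_le_add ?_ ?_)
  · exact add_nonneg (smul_nonneg hA (dirac_nonneg j)) hu
  · exact add_nonneg (add_nonneg (smul_nonneg hB (dirac_nonneg i)) ht) hr
  · simpa [sum_add_distrib, ← mul_sum, sum_dirac] using hmass
  · calc ∑ x, (A • dirac j + u) x * (if x = j then 1 else 2)
        ≤ ∑ x, (A * dirac j x + 2 * u x) := by
          refine sum_le_sum fun x _ => ?_
          have := hu x
          by_cases hx : x = j <;> simp_all [dirac] <;> linarith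
      _ = A + 2 * ∑ x, u x := by
          rw [sum_add_distrib, ← mul_sum, ← mul_sum, sum_dirac, mul_one]
  · refine sum_le_sum fun y _ => ?_
    split_ifs with hy
    · simpa using hr y
    · obtain ⟨hyi, hiy⟩ := not_or.1 hy
      have hty : t y = 0 := Function.notMem_support.1 fun h => hiy (ht_supp h).1
      simp [dirac, hyi, hty]

-- As much of the mass at `j` as possible goes to `r`, and as much of `u` as possible goes to `i`.
theorem transportLE_star_greedy (hij : H.Adj i j) (hA : 0 ≤ A) (hB : 0 ≤ B)
    (hu : 0 ≤ u) (ht : 0 ≤ t) (hr : 0 ≤ r) (hu_supp : u.support ⊆ H.neighborSet i)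
    (ht_supp : t.support ⊆ H.commonNeighbors i j) (hr_supp : r.support ⊆ H.neighborSet j)
    (hmass : A + ∑ x, u x = B + ∑ x, t x + ∑ x, r x) :
    TransportLE H (A • dirac j + u) (B • dirac i + t + r)
      (A + ∑ x, u x + pos (∑ x, u x - B) + pos (∑ x, r x - A)) := by
  obtain ⟨u₁, u₂, hu₁, hu₂, rfl, hu₁_supp, hu₂_supp, hu₁_sum, hu₂_sum⟩ :=
    exists_add_eq_and_sum_eq_min hu hB
  obtain ⟨r₁, r₂, hr₁, hr₂, rfl, hr₁_supp, hr₂_supp, hr₁_sum, hr₂_sum⟩ :=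
    exists_add_eq_and_sum_eq_min hr hA
  have hu₁_le : ∑ x, u₁ x ≤ B := hu₁_sum ▸ min_le_right _ _
  have hr₁_le : ∑ x, r₁ x ≤ A := hr₁_sum ▸ min_le_right _ _
  rw [← hu₂_sum, ← hr₂_sum]
  simp only [Pi.add_apply, sum_add_distrib] at hmass ⊢
  have hinto := transportLE_smul_dirac_of_adj hu₁ (hu₁_supp.trans hu_supp)
  have hfrom := (transportLE_smul_dirac_of_adj hr₁ (hr₁_supp.trans hr_supp)).symm
  have hrest := transportLE_star hij (sub_nonneg.2 hr₁_le) (sub_nonneg.2 hu₁_le) hu₂ ht hr₂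
    (hu₂_supp.trans hu_supp) ht_supp (hr₂_supp.trans hr_supp) (by linarith)
  convert ((hinto.add hfrom).add hrest) using 1
  · module
  · module
  · ring

end Transport

section SquareMass

variable {G}
variable {u v x : V}

theorem mem_uniq : x ∈ uniq G u v ↔ G.Adj u x ∧ x ≠ v ∧ ¬ G.Adj v x := by
  simp [uniq]

theorem thMax_comm (u v : V) : thMax G u v = thMax G v u := by
  rw [thMax, thMax, varpi, varpi, max_comm, max_comm (G.degree u)]

theorem tri_comm (u v : V) : tri G u v = tri G v u := by
  rw [tri, tri, inter_comm]

theorem C4_comm (u v : V) : C4 G u v = C4 G v u := by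
  rw [C4, C4, thMax_comm, Xi, Xi, add_comm]

theorem C4_nonneg (u v : V) : 0 ≤ C4 G u v := by
  unfold C4
  split_ifs <;> positivity

theorem boxT_le_varpi (hx : x ∈ uniq G u v) : boxT G x u v ≤ varpi G u v := by
  obtain ⟨hux, hxv, -⟩ := mem_uniq.1 hx
  have hmem : x ∈ (G.neighborFinset u).erase v := by simp [hux, hxv]
  exact (le_sup (f := fun k => boxT G k u v) hmem).trans (le_max_left _ _)

theorem one_le_boxT (hx : x ∈ xiSet G u v) : 1 ≤ boxT G x u v := by
  obtain ⟨-, w, hw, hxw⟩ := mem_filter.1 hx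
  exact card_pos.2 ⟨w, by simp [hxw, hw]⟩

variable (G) in
/-- The partial transport plan that sends mass `1 / þ_max(u,v)` along every edge between a unique
neighbour of `u` and a unique neighbour of `v`, i.e. along the far side of every 4-cycle on the
edge `(u,v)` without diagonals at `u` and `v`. -/
def squarePlan (u v x y : V) : ℝ :=
  if x ∈ uniq G u v ∧ y ∈ uniq G v u ∧ G.Adj x y then (thMax G u v : ℝ)⁻¹ else 0

variable (G) in
/-- The mass that `squarePlan` takes away from `x`. -/
def squareMass (u v x : V) : ℝ := ∑ y, squarePlan G u v x y

theorem squarePlan_nonneg (u v x y : V) : 0 ≤ squarePlan G u v x y :=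
  ite_nonneg (by positivity) le_rfl

theorem squarePlan_swap (u v x y : V) : squarePlan G u v x y = squarePlan G v u y x := by
  simp only [squarePlan, thMax_comm u v, G.adj_comm x y, and_left_comm]

theorem squareMass_nonneg (u v : V) : 0 ≤ squareMass G u v :=
  fun x => sum_nonneg fun y _ => squarePlan_nonneg u v x y

theorem squareMass_of_mem (hx : x ∈ uniq G u v) :
    squareMass G u v x = boxT G x u v / thMax G u v := by
  have hfilter :
      ({y | y ∈ uniq G v u ∧ G.Adj x y} : Finset V) = G.neighborFinset x ∩ uniq G v u := by
    ext y
    simp [and_comm]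
  simp only [squareMass, squarePlan, hx, true_and]
  rw [← sum_filter, hfilter, sum_const, nsmul_eq_mul, ← div_eq_mul_inv, boxT]

theorem squareMass_of_notMem (hx : x ∉ uniq G u v) : squareMass G u v x = 0 := by
  simp [squareMass, squarePlan, hx]

theorem sum_squareMass_comm (u v : V) : ∑ x, squareMass G u v x = ∑ x, squareMass G v u x := by
  simp only [squareMass, squarePlan_swap u v]
  exact sum_comm

theorem transportLE_squareMass (u v : V) :
    TransportLE G (squareMass G u v) (squareMass G v u) (∑ x, squareMass G u v x) := by
  refine ⟨squarePlan G u v, ⟨squarePlan_nonneg u v, fun _ => rfl, fun y => ?_⟩, ?_⟩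
  · simp only [squarePlan_swap u v, squareMass]
  · refine sum_le_sum fun x _ => sum_le_sum fun y _ => ?_
    unfold squarePlan
    split_ifs with h
    · simp [SimpleGraph.dist_eq_one_iff_adj.2 h.2.2]
    · simp

-- Normalising by `ϖ_max` is what keeps `squarePlan` from using a vertex beyond its capacity.
theorem squareMass_le (u v : V) : squareMass G u v ≤ (rhoMax G u v : ℝ)⁻¹ • ind (uniq G u v) := by
  intro x
  by_cases hx : x ∈ uniq G u v
  · have hbox : (boxT G x u v : ℝ) / varpi G u v ≤ 1 :=
      div_le_one_of_le₀ (by exact_mod_cast boxT_le_varpi hx) (Nat.cast_nonneg _)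
    calc squareMass G u v x = boxT G x u v / varpi G u v / rhoMax G u v := by
          rw [squareMass_of_mem hx, thMax, Nat.cast_mul, div_mul_eq_div_div, rhoMax]
      _ ≤ 1 / rhoMax G u v := by gcongr
      _ = ((rhoMax G u v : ℝ)⁻¹ • ind (uniq G u v)) x := by simp [ind, hx]
  · simp [squareMass_of_notMem hx, ind, hx]

theorem card_xiSet_div_thMax_le (u v : V) :
    (#(xiSet G u v) : ℝ) / thMax G u v ≤ ∑ x, squareMass G u v x :=
  calc (#(xiSet G u v) : ℝ) / thMax G u v
      = ∑ _x ∈ xiSet G u v, 1 / (thMax G u v : ℝ) := by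
        rw [sum_const, nsmul_eq_mul, mul_one_div]
    _ ≤ ∑ x ∈ xiSet G u v, squareMass G u v x := by
        refine sum_le_sum fun x hx => ?_
        rw [squareMass_of_mem (mem_filter.1 hx).1]
        gcongr
        exact_mod_cast one_le_boxT hx
    _ ≤ ∑ x, squareMass G u v x :=
        sum_le_sum_of_subset_of_nonneg (subset_univ _) fun x _ _ => squareMass_nonneg u v x

theorem half_C4_le_sum_squareMass (u v : V) : C4 G u v / 2 ≤ ∑ x, squareMass G u v x := by
  have huv := card_xiSet_div_thMax_le (G := G) u v
  have hvu := card_xiSet_div_thMax_le (G := G) v u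
  rw [← sum_squareMass_comm, thMax_comm] at hvu
  unfold C4 Xi
  split_ifs
  · rw [Nat.cast_add, add_div]
    linarith
  · simpa using sum_nonneg fun x _ => squareMass_nonneg u v x

end SquareMass

section NonLazy

variable {G}
variable {i j : V}

theorem degree_eq_one_add_card_uniq_add_tri (hij : G.Adj i j) :
    G.degree i = 1 + #(uniq G i j) + tri G i j := by
  have hj : j ∈ G.neighborFinset i := by simpa using hij
  have hj' : j ∉ G.neighborFinset i ∩ G.neighborFinset j := by simp
  have hsplit := card_inter_add_card_sdiff (G.neighborFinset i) (insert j (G.neighborFinset j))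
  rw [inter_insert_of_mem hj, card_insert_of_notMem hj',
    SimpleGraph.card_neighborFinset_eq_degree] at hsplit
  rw [uniq, tri]
  omega

theorem tri_lt_rhoMin (hij : G.Adj i j) : tri G i j < rhoMin G i j := by
  have hi := degree_eq_one_add_card_uniq_add_tri hij
  have hj := degree_eq_one_add_card_uniq_add_tri hij.symm
  rw [tri_comm] at hj
  exact lt_min (by omega) (by omega)

theorem unif_eq_smul_add (hij : G.Adj i j) :
    unif G i = (G.degree i : ℝ)⁻¹ •
      (dirac j + ind (uniq G i j) + ind (G.neighborFinset i ∩ G.neighborFinset j)) := by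
  ext x
  by_cases hxj : x = j
  · simp [unif, dirac, ind, mem_uniq, hxj, hij]
  · by_cases hix : G.Adj i x <;> by_cases hjx : G.Adj j x <;>
      simp [unif, dirac, ind, mem_uniq, hxj, hix, hjx]

variable (G) in
/-- The part of the mass of `unif G u` on the unique neighbours of `u` that `squarePlan G u v`
leaves in place. -/
def residue (u v : V) : V → ℝ := (G.degree u : ℝ)⁻¹ • ind (uniq G u v) - squareMass G u v

theorem residue_nonneg (hij : G.Adj i j) : 0 ≤ residue G i j := by
  have hdeg : (0 : ℝ) < G.degree i := by exact_mod_cast hij.degree_pos_left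
  have hinv : (rhoMax G i j : ℝ)⁻¹ ≤ (G.degree i : ℝ)⁻¹ :=
    inv_anti₀ hdeg (by exact_mod_cast le_max_left _ _)
  exact sub_nonneg.2 ((squareMass_le i j).trans (smul_le_smul_of_nonneg_right hinv (ind_nonneg _)))

theorem support_residue_subset (u v : V) : (residue G u v).support ⊆ G.neighborSet u :=
  fun x hx => by
    by_contra hux
    have hx' : x ∉ uniq G u v := fun h => hux (mem_uniq.1 h).1
    exact hx (by simp [residue, ind, hx', squareMass_of_notMem hx'])

theorem sum_residue (hij : G.Adj i j) :
    ∑ x, residue G i j x = 1 - (G.degree i : ℝ)⁻¹ - (G.degree i : ℝ)⁻¹ * tri G i j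
      - ∑ x, squareMass G i j x := by
  have hdeg : (G.degree i : ℝ) ≠ 0 := by exact_mod_cast hij.degree_pos_left.ne'
  have hcard : (#(uniq G i j) : ℝ) = G.degree i - 1 - tri G i j := by
    rw [degree_eq_one_add_card_uniq_add_tri hij]
    push_cast
    ring
  simp only [residue, Pi.sub_apply, Pi.smul_apply, smul_eq_mul, sum_sub_distrib, ← mul_sum,
    sum_ind, hcard]
  rw [mul_sub, mul_sub, inv_mul_cancel₀ hdeg, mul_one]

variable (G) in
/-- A lower bound for the non-lazy Ollivier–Ricci curvature in the style of Jost and Liu, in which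
`C₄ / 2` accounts for the mass that travels along the far sides of 4-cycles. -/
def jostLiuBound (i j : V) : ℝ :=
  Zmax G i j - pos (frakK G i j - Zmax G i j - C4 G i j / 2)
    - pos (frakK G i j - Zmin G i j - C4 G i j / 2)

theorem jostLiuBound_comm (i j : V) : jostLiuBound G i j = jostLiuBound G j i := by
  simp only [jostLiuBound, Zmax, Zmin, frakK, rhoMin, rhoMax, tri_comm i j, C4_comm i j,
    min_comm (G.degree i), max_comm (G.degree i)]

theorem pos_mono {a b : ℝ} (h : a ≤ b) : pos a ≤ pos b := max_le_max_right 0 h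

-- Common neighbours keep the mass the two measures share there and the squares carry `squarePlan`;
-- what is left lives on the star around the edge.
theorem transportLE_unif_of_degree_le (hij : G.Adj i j) (hle : G.degree j ≤ G.degree i) :
    TransportLE G (unif G i) (unif G j)
      (1 - (G.degree i : ℝ)⁻¹ * tri G i j
        + pos (∑ x, residue G i j x - (G.degree j : ℝ)⁻¹)
        + pos (∑ x, residue G j i x - (G.degree i : ℝ)⁻¹)) := by
  have hdegj : (0 : ℝ) < G.degree j := by exact_mod_cast hij.degree_pos_right
  set P := (G.degree i : ℝ)⁻¹ with hP
  set Q := (G.degree j : ℝ)⁻¹ with hQ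
  set T := G.neighborFinset i ∩ G.neighborFinset j with hT
  have hP0 : 0 ≤ P := by positivity
  have hPQ : 0 ≤ Q - P := sub_nonneg.2 (inv_anti₀ hdegj (by exact_mod_cast hle))
  have hT_supp : ((Q - P) • ind T).support ⊆ G.commonNeighbors i j := by
    refine (Function.support_const_smul_subset _ _).trans (support_ind T ▸ fun x hx => ?_)
    simpa [hT, SimpleGraph.mem_commonNeighbors] using hx
  have hT_sum : ∑ x, ((Q - P) • ind T) x = (Q - P) * tri G i j := by
    simp only [Pi.smul_apply, smul_eq_mul, ← mul_sum, sum_ind, hT, tri]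
  have hi_sum := sum_residue hij
  have hj_sum := sum_residue hij.symm
  rw [← hP] at hi_sum
  rw [← hQ, ← sum_squareMass_comm, tri_comm] at hj_sum
  have hstay := transportLE_self (H := G) (smul_nonneg hP0 (ind_nonneg T))
  have hsquare := transportLE_squareMass (G := G) i j
  have hstar := transportLE_star_greedy hij hP0 (by positivity : 0 ≤ Q) (residue_nonneg hij)
    (smul_nonneg hPQ (ind_nonneg T)) (residue_nonneg hij.symm) (support_residue_subset i j) hT_supp
    (support_residue_subset j i) (by rw [hi_sum, hT_sum, hj_sum]; ring)
  convert (hstay.add hsquare).add hstar using 1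
  · rw [unif_eq_smul_add hij, residue, ← hP, ← hT]
    module
  · rw [unif_eq_smul_add hij.symm, residue, inter_comm, ← hQ, ← hT]
    module
  · linarith

theorem transportLE_unif_jostLiuBound_of_degree_le (hij : G.Adj i j)
    (hle : G.degree j ≤ G.degree i) :
    TransportLE G (unif G i) (unif G j) (1 - jostLiuBound G i j) := by
  have hmax : rhoMax G i j = G.degree i := max_eq_left hle
  have hmin : rhoMin G i j = G.degree j := min_eq_right hle
  have hZmax : Zmax G i j = (G.degree i : ℝ)⁻¹ * tri G i j := by rw [Zmax, hmax, div_eq_inv_mul]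
  have hZmin : Zmin G i j = (G.degree j : ℝ)⁻¹ * tri G i j := by rw [Zmin, hmin, div_eq_inv_mul]
  have hC4 := half_C4_le_sum_squareMass (G := G) i j
  have hi_pos : pos (∑ x, residue G i j x - (G.degree j : ℝ)⁻¹)
      ≤ pos (frakK G i j - Zmax G i j - C4 G i j / 2) := by
    refine pos_mono ?_
    rw [sum_residue hij, hZmax, frakK, hmax, hmin, one_div, one_div]
    linarith
  have hj_pos : pos (∑ x, residue G j i x - (G.degree i : ℝ)⁻¹)
      ≤ pos (frakK G i j - Zmin G i j - C4 G i j / 2) := by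
    refine pos_mono ?_
    rw [sum_residue hij.symm, ← sum_squareMass_comm, tri_comm, hZmin, frakK, hmax, hmin,
      one_div, one_div]
    linarith
  refine (transportLE_unif_of_degree_le hij hle).mono ?_
  rw [← hZmax]
  unfold jostLiuBound
  linarith

theorem transportLE_unif_jostLiuBound (hij : G.Adj i j) :
    TransportLE G (unif G i) (unif G j) (1 - jostLiuBound G i j) := by
  rcases le_total (G.degree j) (G.degree i) with hle | hle
  · exact transportLE_unif_jostLiuBound_of_degree_le hij hle
  · rw [jostLiuBound_comm]
    exact (transportLE_unif_jostLiuBound_of_degree_le hij.symm hle).symm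

theorem cBF_le (i j : V) :
    cBF G i j ≤ frakS G i j + frakT G i j * tri G i j + C4 G i j := by
  unfold cBF
  split_ifs with hmin
  · have hC4 := C4_nonneg (G := G) i j
    have hT : 0 ≤ frakT G i j * tri G i j := by
      unfold frakT
      positivity
    have hS : 0 ≤ frakS G i j := by
      unfold frakS
      rcases min_choice (G.degree i) (G.degree j) with h | h <;>
        rw [rhoMin, h] at hmin <;> rw [hmin] <;> norm_num <;> positivity
    positivity
  · exact le_rfl

theorem Zzeta_le_tri (hij : G.Adj i j) {z : ℝ} (hz : z ≤ cBF G i j) :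
    Zzeta G i j z ≤ tri G i j := by
  refine max_le (Nat.cast_nonneg _) ((div_le_iff₀' (frakT_pos hij)).2 ?_)
  linarith [cBF_le (G := G) i j]

theorem Sfloor_le_half_C4 (hij : G.Adj i j) {z : ℝ} (hz : z ≤ cBF G i j) :
    Sfloor G i j z ≤ C4 G i j / 2 := by
  have htri : (tri G i j : ℝ) ≤ rhoMin G i j - 1 := by
    rw [le_sub_iff_add_le]
    exact_mod_cast tri_lt_rhoMin hij
  have hpos : pos (z - frakS G i j - frakT G i j * ((rhoMin G i j : ℝ) - 1)) ≤ C4 G i j := by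
    refine max_le ?_ (C4_nonneg i j)
    linarith [cBF_le (G := G) i j, mul_le_mul_of_nonneg_left htri (frakT_pos hij).le]
  exact max_le le_rfl (by linarith)

theorem phi0_le_jostLiuBound (hij : G.Adj i j) {z : ℝ} (hz : z ≤ cBF G i j) :
    phi0 G i j z ≤ jostLiuBound G i j := by
  have hZ := Zzeta_le_tri hij hz
  have hS := Sfloor_le_half_C4 hij hz
  have hZmax : Zzeta G i j z / rhoMax G i j ≤ Zmax G i j := by
    unfold Zmax
    gcongr
  have hZmin : Zzeta G i j z / rhoMin G i j ≤ Zmin G i j := by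
    unfold Zmin
    gcongr
  calc phi0 G i j z
      ≤ -pos (frakK G i j - Zmax G i j - C4 G i j / 2)
          - pos (frakK G i j - Zmin G i j - C4 G i j / 2) + Zmax G i j := by
        unfold phi0
        gcongr <;> refine pos_mono ?_ <;> gcongr
    _ = jostLiuBound G i j := by
        unfold jostLiuBound
        ring

end NonLazy

section Lazy

variable {G}
variable {i j : V} {a b c d κ : ℝ}

theorem transportLE_mGen (hij : G.Adj i j) (ha : 0 ≤ a) (hab : a ≤ b) (hb : b ≤ 1)
    (hc : TransportLE G (unif G i) (unif G j) c) (hd : TransportLE G (unif G i) (dirac j) d) :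
    TransportLE G (mGen G a i) (mGen G b j) (a + (b - a) * d + (1 - b) * c) := by
  convert (((transportLE_dirac_of_adj hij).smul ha).add (hd.smul (sub_nonneg.2 hab))).add
    (hc.smul (sub_nonneg.2 hb)) using 1
  · ext x
    simp only [mGen, Pi.add_apply, Pi.smul_apply, smul_eq_mul]
    ring
  · ext x
    simp only [mGen, Pi.add_apply, Pi.smul_apply, smul_eq_mul]
    ring
  · ring

theorem transportLE_unif_dirac_two (hij : G.Adj i j) :
    TransportLE G (unif G i) (dirac j) 2 := by
  have h := transportLE_of_dist_le (H := G) (d := 2) (unif_nonneg i) (dirac_nonneg j)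
    (by rw [sum_unif hij, sum_dirac]) fun x y hx hy => by
      have hxi : G.Adj x i := (support_unif_subset i hx).symm
      rw [eq_of_dirac_ne_zero hy]
      exact G.dist_le (.cons hxi (.cons hij .nil))
  simpa [sum_unif hij] using h

-- The excess `b - a` of lazy mass at `j` is fed from `N(i)` either through `N(j)`, at unit cost
-- `c + 1`, or through `i`, at unit cost `2`; the two routes give the two values of `t`.
theorem transportLE_mGen_of_eq_or_eq (hij : G.Adj i j) (ha : 0 ≤ a) (hab : a ≤ b) (hb : b ≤ 1)
    (hκ : TransportLE G (unif G i) (unif G j) (1 - κ)) {t : ℝ} (ht : t = a ∨ t = b) :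
    TransportLE G (mGen G a i) (mGen G b j) (1 - ((1 - t) * κ - (b - a))) := by
  rcases ht with rfl | rfl
  · have hd := hκ.smul_dirac (support_unif_subset j)
    rw [sum_unif hij, one_smul] at hd
    exact (transportLE_mGen hij ha hab hb hκ hd).mono (by linarith)
  · exact (transportLE_mGen hij ha hab hb hκ (transportLE_unif_dirac_two hij)).mono (by linarith)

theorem transportLE_mLazy (hij : G.Adj i j)
    (hκ : TransportLE G (unif G i) (unif G j) (1 - κ)) :
    TransportLE G (mLazy G i) (mLazy G j) (1 - ((1 - alphaStar G i j) * κ - DeltaL G i j)) := by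
  rw [DeltaL_eq_abs]
  rcases le_total (alphaL G i) (alphaL G j) with hle | hle
  · rw [abs_sub_comm, abs_of_nonneg (sub_nonneg.2 hle)]
    exact transportLE_mGen_of_eq_or_eq hij (alphaL_nonneg i) hle (alphaL_le_one j) hκ
      (alphaStar_eq_or_eq i j)
  · rw [abs_of_nonneg (sub_nonneg.2 hle)]
    exact (transportLE_mGen_of_eq_or_eq hij.symm (alphaL_nonneg j) hle (alphaL_le_one i) hκ.symm
      (alphaStar_eq_or_eq i j).symm).symm

end Lazy

theorem stmt13_general (i j : V) (hij : G.Adj i j) (z : ℝ) (hBF : cBF G i j ≥ z) :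
    cOR G i j ≥ phiBFOR G i j z := by
  have hW1 : W1 G (mLazy G i) (mLazy G j)
      ≤ 1 - ((1 - alphaStar G i j) * jostLiuBound G i j - DeltaL G i j) :=
    (transportLE_mLazy hij (transportLE_unif_jostLiuBound hij)).W1_le
  have hphi0 : (1 - alphaStar G i j) * phi0 G i j z
      ≤ (1 - alphaStar G i j) * jostLiuBound G i j :=
    mul_le_mul_of_nonneg_left (phi0_le_jostLiuBound hij hBF) (sub_nonneg.2 (alphaStar_le_one i j))
  unfold cOR phiBFOR
  linarith

/-- BF-to-OR lower transfer modulus. -/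
theorem stmt13 (hG : G.Connected) (i j : V) (hij : G.Adj i j)
    (hmin : 2 ≤ rhoMin G i j) (z : ℝ) (hBF : cBF G i j ≥ z) :
    cOR G i j ≥ phiBFOR G i j z :=
  stmt13_general G i j hij z hBF

end

end Curv
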